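/- Let n ≥ 2 and let w = (b a^{n−1})^{n−2} b be the reset word of the Černý automaton C_n of length (n−1)². For every 1 ≤ j ≤ (n−1)², let w_j denote the suffix of w of length j. Then the preimage of the singleton {0} under the map δ_{w_j} has cardinality exactly 2 + ⌊(j−1)/n⌋. In particular, for j = (n−1)² this preimage is all of Z_n, and the cardinalities of these preimages increase by exactly 1 at each position j ≡ 1 (mod n) and otherwise stay constant along the suffixes. -/

import Mathlib

/-- The two-letter alphabet of the Černý automaton. -/
inductive Letter
  | a
  | b
deriving DecidableEq

/-- The action of a letter of the Černý automaton `C_n` on the state set `ZMod n`: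
`a` sends `i` to `i + 1 (mod n)`, and `b` sends `n - 1` to `0` and fixes every other state. -/
def step (n : ℕ) : Letter → ZMod n → ZMod n
  | Letter.a, p => p + 1
  | Letter.b, p => if p = -1 then 0 else p

/-- The map `δ_w` induced by a word `w`, applying letters left to right. -/
def run (n : ℕ) : List Letter → ZMod n → ZMod n
  | [], p => p
  | x :: w, p => run n w (step n x p)

/-- The word `(b a^{n-1})^{n-2} b`: `n - 2` repetitions of the block consisting of one
`b` followed by `n - 1` copies of `a`, followed by one final `b`. -/
def cernyWord (n : ℕ) : List Letter :=
  (List.replicate (n - 2) (Letter.b :: List.replicate (n - 1) Letter.a)).flatten ++ [Letter.b]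

/-!
Track a state `p` by its cyclic distance from `-1`, the representative of `p + 1` in `[0, n)`.
Since `a^{n-1}` undoes one `a`, the block `b a^{n-1}` acts on this distance as truncated
predecessor, while the final `b` sends to `0` exactly the states at distance at most `1`. Hence
`(b a^{n-1})^k b` sends to `0` exactly the states at distance at most `k + 1`. The suffix
of length `j` is this word for `k = ⌊(j - 1) / n⌋`, preceded by `(j - 1) mod n` letters `a`,
which only rotate the preimage.
-/

/-- The block `b a^{n-1}` repeated in the reset word. -/
def cernyBlock (n : ℕ) : List Letter := Letter.b :: List.replicate (n - 1) Letter.a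

/-- The word `(b a^{n-1})^k b`. The reset word `cernyWord n` is the case `k = n - 2`, and its
nonempty suffixes are words `a^r (b a^{n-1})^k b` with `r < n` and `k ≤ n - 2`. -/
def blockWord (n k : ℕ) : List Letter := (List.replicate k (cernyBlock n)).flatten ++ [Letter.b]

section Words

variable {n k m r i : ℕ}

theorem cernyWord_eq_blockWord (n : ℕ) : cernyWord n = blockWord n (n - 2) := rfl

theorem blockWord_succ (n k : ℕ) : blockWord n (k + 1) = cernyBlock n ++ blockWord n k := by
  simp [blockWord, List.replicate_succ]

theorem length_cernyBlock (n : ℕ) [NeZero n] : (cernyBlock n).length = n := by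
  simp [cernyBlock, Nat.sub_add_cancel NeZero.one_le]

theorem length_blockWord (n k : ℕ) [NeZero n] : (blockWord n k).length = n * k + 1 := by
  simp [blockWord, length_cernyBlock, Nat.mul_comm]

theorem blockWord_suffix_blockWord (n : ℕ) (h : k ≤ m) : blockWord n k <:+ blockWord n m := by
  induction m, h using Nat.le_induction with
  | base => exact List.suffix_rfl
  | succ m _ ih => exact blockWord_succ n m ▸ List.suffix_append_of_suffix ih

theorem replicate_a_append_blockWord_suffix_succ (k : ℕ) (hr : r < n) :
    List.replicate r Letter.a ++ blockWord n k <:+ blockWord n (k + 1) := by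
  rw [blockWord_succ, List.suffix_append_self_iff]
  have hsuffix : List.replicate r Letter.a <:+ List.replicate (n - 1) Letter.a :=
    List.suffix_replicate_iff.2 ⟨by rw [List.length_replicate]; omega, by simp⟩
  exact hsuffix.trans (List.suffix_cons _ _)

theorem replicate_a_append_blockWord_suffix (hr : r < n) (h : n * k + r ≤ n * m) :
    List.replicate r Letter.a ++ blockWord n k <:+ blockWord n m := by
  have : NeZero n := ⟨by omega⟩
  -- Both words are suffixes of one long word, so comparing their lengths suffices.
  refine List.suffix_of_suffix_length_le (l₃ := blockWord n (max (k + 1) m)) ?_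
    (blockWord_suffix_blockWord n (le_max_right _ _)) ?_
  · exact (replicate_a_append_blockWord_suffix_succ k hr).trans
      (blockWord_suffix_blockWord n (le_max_left _ _))
  · simp only [List.length_append, List.length_replicate, length_blockWord]
    omega

theorem drop_blockWord [NeZero n] (hi : i ≤ n * m) :
    (blockWord n m).drop (n * m - i) =
      List.replicate (i % n) Letter.a ++ blockWord n (i / n) := by
  have hdiv : n * (i / n) + i % n = i := Nat.div_add_mod i n
  have hsuffix : List.replicate (i % n) Letter.a ++ blockWord n (i / n) <:+ blockWord n m :=
    replicate_a_append_blockWord_suffix (Nat.mod_lt i (NeZero.pos n)) (hdiv.trans_le hi)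
  rw [List.suffix_iff_eq_drop.1 hsuffix]
  congr 1
  simp only [List.length_append, List.length_replicate, length_blockWord]
  omega

end Words

section Action

theorem run_append (n : ℕ) (u v : List Letter) (p : ZMod n) :
    run n (u ++ v) p = run n v (run n u p) := by
  induction u generalizing p with
  | nil => rfl
  | cons x _ ih => exact ih (step n x p)

theorem run_replicate_a (n r : ℕ) (p : ZMod n) :
    run n (List.replicate r Letter.a) p = p + r := by
  induction r generalizing p with
  | zero => simp [run]
  | succ r ih =>
    simp only [List.replicate_succ, run, step, ih, Nat.cast_succ]
    ring

variable (n : ℕ) [NeZero n]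

theorem run_cernyBlock_add_one (p : ZMod n) :
    run n (cernyBlock n) p + 1 = step n Letter.b p := by
  simp [cernyBlock, run, run_replicate_a, Nat.cast_sub (NeZero.one_le : 1 ≤ n)]

theorem val_step_b (p : ZMod n) : (step n Letter.b p).val = (p + 1).val - 1 := by
  by_cases hp : p = -1
  · simp [step, hp]
  have hpos : 0 < (p + 1).val :=
    ZMod.val_pos.2 fun h => hp (eq_neg_of_add_eq_zero_left h)
  have hone : (1 : ZMod n).val = 1 := ZMod.val_one'' (by have := (p + 1).val_lt; omega)
  calc (step n Letter.b p).val = (p + 1 - 1).val := by simp [step, hp]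
    _ = (p + 1).val - 1 := by rw [ZMod.val_sub (by omega), hone]

theorem val_run_blockWord (k : ℕ) (p : ZMod n) :
    (run n (blockWord n k) p).val = (p + 1).val - (k + 1) := by
  induction k generalizing p with
  | zero => exact val_step_b n p
  | succ k ih =>
    rw [blockWord_succ, run_append, ih, run_cernyBlock_add_one, val_step_b]
    omega

theorem run_replicate_a_append_blockWord_eq_zero_iff (r k : ℕ) (p : ZMod n) :
    run n (List.replicate r Letter.a ++ blockWord n k) p = 0 ↔ (p + (r + 1)).val < k + 2 := by
  rw [run_append, run_replicate_a, ← ZMod.val_eq_zero, val_run_blockWord, add_assoc]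
  omega

theorem ncard_setOf_val_lt (m : ℕ) : {q : ZMod n | q.val < m}.ncard = min m n := by
  have himage : ZMod.val '' {q : ZMod n | q.val < m} = Set.Iio (min m n) := by
    ext i
    constructor
    · rintro ⟨q, hq, rfl⟩
      exact lt_min hq q.val_lt
    · intro hi
      obtain ⟨him, hin⟩ := lt_min_iff.1 (Set.mem_Iio.1 hi)
      exact ⟨i, by simpa [ZMod.val_natCast_of_lt hin], ZMod.val_natCast_of_lt hin⟩
  rw [← Set.ncard_image_of_injective _ (ZMod.val_injective n), himage]
  simp

theorem ncard_run_replicate_a_append_blockWord_eq_zero (r k : ℕ) :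
    {p : ZMod n | run n (List.replicate r Letter.a ++ blockWord n k) p = 0}.ncard
      = min (k + 2) n := by
  have hpreimage : {p : ZMod n | run n (List.replicate r Letter.a ++ blockWord n k) p = 0} =
      Equiv.addRight ((r : ZMod n) + 1) ⁻¹' {q | q.val < k + 2} := by
    ext p
    exact run_replicate_a_append_blockWord_eq_zero_iff n r k p
  rw [hpreimage, ← ncard_setOf_val_lt n (k + 2)]
  exact Set.ncard_preimage_of_injective_subset_range (Equiv.injective _)
    (by simp only [Equiv.range_eq_univ, Set.subset_univ])

end Action

/-- For `n ≥ 2` and the reset word `w = (b a^{n-1})^{n-2} b` of length `(n - 1)²` of the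
Černý automaton `C_n`: for every `1 ≤ j ≤ (n - 1)²`, the preimage of `{0}` under the map
induced by the suffix of `w` of length `j` has exactly `2 + (j - 1) / n` elements. -/
theorem cerny_word_suffix_preimage_card (n : ℕ) (hn : 2 ≤ n) (j : ℕ)
    (hj1 : 1 ≤ j) (hj2 : j ≤ (n - 1) ^ 2) :
    {p : ZMod n | run n ((cernyWord n).drop ((n - 1) ^ 2 - j)) p = 0}.ncard
      = 2 + (j - 1) / n := by
  have : NeZero n := ⟨by omega⟩
  have hsq : (n - 1) ^ 2 = n * (n - 2) + 1 := by
    obtain ⟨t, rfl⟩ := Nat.exists_eq_add_of_le' hn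
    simp only [Nat.add_sub_cancel, show t + 2 - 1 = t + 1 by omega]
    ring
  have hdrop : (n - 1) ^ 2 - j = n * (n - 2) - (j - 1) := by omega
  have hj : j - 1 ≤ n * (n - 2) := by omega
  have hdiv : (j - 1) / n ≤ n - 2 := Nat.div_le_of_le_mul hj
  rw [cernyWord_eq_blockWord, hdrop, drop_blockWord hj,
    ncard_run_replicate_a_append_blockWord_eq_zero]
  omega
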